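/- Let P be a finite pure weighted graded poset of rank d, let 0 ≤ l ≤ d−1, and let α ∈ ℝ. For x ∈ P(l−1) let μ'_x and ν'_x denote, respectively, the second largest and the least eigenvalue of the self-adjoint operator M^+_{x,0} on C^0(P_x), and set μ'_{l−1} = max_{x∈P(l−1)} μ'_x and ν'_{l−1} = min_{x∈P(l−1)} ν'_x. Then for all f, g ∈ C^l: (i) Σ_{x∈P(l−1)} m(x)·⟨(M^+_{x,0} − α·Id)(Id − M^−_{x,0}) f_x, f_x⟩_x ≤ max{μ'_{l−1} − α, 0}·‖f‖², and (ii) Σ_{x∈P(l−1)} m(x)·|⟨(M^+_{x,0} − α·Id)(Id − M^−_{x,0}) f_x, g_x⟩_x| ≤ max{μ'_{l−1} − α, α − ν'_{l−1}}·‖f‖·‖g‖. -/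

import Mathlib

open Finset

attribute [local instance] Classical.propDecidable

noncomputable section

/-- A finite pure weighted graded poset of rank `d`, presented as a rank function
and a weight scheme on a finite partial order `P`. -/
structure WGP (P : Type) [Fintype P] [PartialOrder P] where
  /-- the rank of the poset -/
  d : ℤ
  /-- the rank function -/
  rk : P → ℤ
  rk_mono : Monotone rk
  rk_lb : ∀ x, -1 ≤ rk x
  rk_ub : ∀ x, rk x ≤ d
  rk_covBy : ∀ a b : P, a ⋖ b → rk b = rk a + 1
  bot_unique : ∃! x : P, rk x = -1
  isPure : ∀ x : P, ∃ y : P, rk y = d ∧ x ≤ y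
  /-- the weight function -/
  m : P → ℝ
  m_pos : ∀ x, 0 < m x
  /-- the transition probabilities: `p y x` is `p_{y → x}` -/
  p : P → P → ℝ
  p_nonneg : ∀ y x, 0 ≤ p y x
  p_pos_iff : ∀ y x, 0 < p y x ↔ x ⋖ y
  p_sum : ∀ y, 0 ≤ rk y → ∑ x ∈ univ.filter (fun x => x ⋖ y), p y x = 1
  m_eq : ∀ x, rk x < d → m x = ∑ y ∈ univ.filter (fun y => x ⋖ y), p y x * m y
  m_bot : ∀ x, rk x = -1 → m x = 1

/-- `T` has at most `n` eigenvalues greater than `c`, counted with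
(geometric) multiplicity. -/
def eigMultAboveLe {V : Type*} [AddCommGroup V] [Module ℝ V]
    (T : Module.End ℝ V) (c : ℝ) (n : ℕ) : Prop :=
  ∀ s : Finset ℝ, (∀ μ ∈ s, c < μ) →
    ∑ μ ∈ s, Module.finrank ℝ (T.eigenspace μ) ≤ n

/-- `μ` is the second largest eigenvalue of `T`, counted with multiplicity. -/
def IsSecondLargestEig {V : Type*} [AddCommGroup V] [Module ℝ V]
    (T : Module.End ℝ V) (μ : ℝ) : Prop :=
  T.HasEigenvalue μ ∧ eigMultAboveLe T μ 1 ∧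
    ∃ s : Finset ℝ, (∀ ν ∈ s, μ ≤ ν) ∧
      2 ≤ ∑ ν ∈ s, Module.finrank ℝ (T.eigenspace ν)

/-- `ν` is the least eigenvalue of `T`. -/
def IsLeastEig {V : Type*} [AddCommGroup V] [Module ℝ V]
    (T : Module.End ℝ V) (ν : ℝ) : Prop :=
  T.HasEigenvalue ν ∧ ∀ c : ℝ, T.HasEigenvalue c → ν ≤ c

/-- `λ(T) ≤ lam`, i.e. the second largest eigenvalue of `T` (with multiplicity)
is at most `lam` and the least eigenvalue is at least `-lam`. -/
def lamBd {V : Type*} [AddCommGroup V] [Module ℝ V]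
    (T : Module.End ℝ V) (lam : ℝ) : Prop :=
  eigMultAboveLe T lam 1 ∧ ∀ c : ℝ, T.HasEigenvalue c → -lam ≤ c

namespace WGP

variable {P : Type} [Fintype P] [PartialOrder P] (W : WGP P)

/-- The level set `P(i)`. -/
def lvl (i : ℤ) : Finset P := univ.filter (fun x => W.rk x = i)

/-- The weighted inner product on `C^i`. -/
def innerAt (i : ℤ) (f g : P → ℝ) : ℝ := ∑ x ∈ W.lvl i, W.m x * f x * g x

/-- The squared norm on `C^i`. -/
def normSqAt (i : ℤ) (f : P → ℝ) : ℝ := W.innerAt i f f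

/-- The norm on `C^i`. -/
def normAt (i : ℤ) (f : P → ℝ) : ℝ := Real.sqrt (W.normSqAt i f)

/-- The matrix of transition probabilities : entry `(y, x)` is `p_{y→x}`,
which vanishes unless `x ⋖ y`.  This is also the matrix of the up operator. -/
def upMat : Matrix P P ℝ := Matrix.of fun y x => W.p y x

/-- The matrix of the down operator. -/
def downMat : Matrix P P ℝ := Matrix.of fun x y => W.p y x * W.m y / W.m x

/-- The up operator `U`. -/
def Up (f : P → ℝ) : P → ℝ := W.upMat.mulVec f

/-- The down operator `D`. -/
def Down (f : P → ℝ) : P → ℝ := W.downMat.mulVec f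

/-- `chSum x y = Σ_{c ∈ Ch(y→x)} p(c)`, the total `p`-weight of maximal chains
from `x` up to `y` (the entry of the corresponding power of the transition
matrix). -/
def chSum (x y : P) : ℝ := (W.upMat ^ (W.rk y - W.rk x).toNat) y x

/-- The induced weight function of the link `P_x`. -/
def mL (x y : P) : ℝ := W.m y / W.m x * W.chSum x y

/-- The induced transition probabilities of the link `P_x` :
`pL x z y = (p_x)_{z → y}`. -/
def pL (x z y : P) : ℝ := W.p z y * W.chSum x y / W.chSum x z

/-- The level set `P_x(j)` of the link of `x`. -/
def linkLvl (x : P) (j : ℤ) : Finset P :=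
  univ.filter (fun y => x ≤ y ∧ W.rk y = W.rk x + 1 + j)

/-- The inner product of the link `P_x` at link-level `j`. -/
def innerL (x : P) (j : ℤ) (f g : P → ℝ) : ℝ :=
  ∑ y ∈ W.linkLvl x j, W.mL x y * f y * g y

/-- The matrix of the up operator of the link `P_x`. -/
def upMatL (x : P) : Matrix P P ℝ :=
  Matrix.of fun z y => if y ⋖ z ∧ x ≤ y then W.pL x z y else 0

/-- The matrix of the down operator of the link `P_x`. -/
def downMatL (x : P) : Matrix P P ℝ :=
  Matrix.of fun y z => if y ⋖ z then W.pL x z y * W.mL x z / W.mL x y else 0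

/-- The up operator of the link `P_x`. -/
def UpL (x : P) (f : P → ℝ) : P → ℝ := (W.upMatL x).mulVec f

/-- The down operator of the link `P_x`. -/
def DownL (x : P) (f : P → ℝ) : P → ℝ := (W.downMatL x).mulVec f

/-- The up-down walk `M^+_{x,0}` of the link `P_x`. -/
def MplusL (x : P) (f : P → ℝ) : P → ℝ := W.DownL x (W.UpL x f)

/-- The down-up walk `M^-_{x,0}` of the link `P_x`. -/
def MminusL (x : P) (f : P → ℝ) : P → ℝ := W.UpL x (W.DownL x f)

/-- The adjacency matrix. -/
def adjMat : Matrix P P ℝ := Matrix.of fun y x =>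
  if x = y then 0 else
    ∑ z ∈ univ.filter (fun z => x ⋖ z ∧ y ⋖ z),
      W.m z * W.p z x * W.p z y / ((1 - W.p z y) * W.m y)

/-- The adjacency operator. -/
def Adj (f : P → ℝ) : P → ℝ := W.adjMat.mulVec f

/-- The adjacency matrix of the link `P_x`. -/
def adjMatL (x : P) : Matrix P P ℝ := Matrix.of fun y w =>
  if w = y then 0 else
    ∑ z ∈ univ.filter (fun z => w ⋖ z ∧ y ⋖ z),
      W.mL x z * W.pL x z w * W.pL x z y / ((1 - W.pL x z y) * W.mL x y)

/-- The adjacency operator of the link `P_x`. -/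
def AdjL (x : P) (f : P → ℝ) : P → ℝ := (W.adjMatL x).mulVec f

/-- The up-down walk `M^+_l` as an endomorphism of `C^l`. -/
def MplusEnd (l : ℤ) : Module.End ℝ ({x : P // W.rk x = l} → ℝ) :=
  ((W.downMat * W.upMat).submatrix Subtype.val Subtype.val).mulVecLin

/-- The up-down walk `M^+_{x,0}` as an endomorphism of `C^0(P_x)`. -/
def MplusEndL (x : P) : Module.End ℝ ({y : P // x ⋖ y} → ℝ) :=
  ((W.downMatL x * W.upMatL x).submatrix Subtype.val Subtype.val).mulVecLin

/-- The adjacency operator `A_x` of the link `P_x` as an endomorphism of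
`C^0(P_x)`. -/
def AdjEndL (x : P) : Module.End ℝ ({y : P // x ⋖ y} → ℝ) :=
  ((W.adjMatL x).submatrix Subtype.val Subtype.val).mulVecLin

/-- A standard weight scheme. -/
def Standard : Prop :=
  ∀ y x : P, x ⋖ y → W.p y x = 1 / ((univ.filter (fun z => z ⋖ y)).card : ℝ)

/-- `P` is lower regular at level `i` with constant `N`. -/
def LowerRegAt (i : ℤ) (N : ℕ) : Prop :=
  ∀ y : P, W.rk y = i → (univ.filter (fun z => z ⋖ y)).card = N

/-- `P` is middle regular at level `i` with constant `N`. -/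
def MiddleRegAt (i : ℤ) (N : ℕ) : Prop :=
  ∀ x z : P, W.rk x = i + 1 → W.rk z = i - 1 → z < x →
    (univ.filter (fun y => z ⋖ y ∧ y ⋖ x)).card = N

/-- `P` is `∨∧`-regular at level `i` with constant `N`. -/
def WedgeRegAt (i : ℤ) (N : ℕ) : Prop :=
  ∀ y₁ y₂ : P, W.rk y₁ = i → W.rk y₂ = i → y₁ ≠ y₂ → (∃ z, y₁ ⋖ z ∧ y₂ ⋖ z) →
    (univ.filter (fun s => s ⋖ y₁ ∧ s ⋖ y₂)).card = N

/-- `P` is `⅄`-regular with constant `R`. -/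
def WyeReg (R : ℕ) : Prop :=
  ∀ u y₁ y₂ : P, W.rk u = 2 → W.rk y₁ = 0 → W.rk y₂ = 0 → y₁ ≠ y₂ →
    y₁ < u → y₂ < u →
    (univ.filter (fun z => y₁ ⋖ z ∧ y₂ ⋖ z ∧ z ⋖ u)).card = R

/-- Property UL.1 with constants `c`. -/
def UL1 (c : ℤ → ℝ) : Prop :=
  ∀ l : ℤ, 0 ≤ l → l < W.d → ∀ y : P, W.rk y = l → ∀ x : P, y ⋖ x →
    ∑ z ∈ univ.filter (fun z => z ⋖ y), W.p y z ^ 2 / W.chSum z x = c l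

/-- Property UL.2 with constants `c`. -/
def UL2 (c : ℤ → ℝ) : Prop :=
  ∀ l : ℤ, 0 ≤ l → l < W.d → ∀ y₁ y₂ : P, W.rk y₁ = l → W.rk y₂ = l → y₁ ≠ y₂ →
    ∀ x : P, y₁ ⋖ x → y₂ ⋖ x →
    ∑ z ∈ univ.filter (fun z => z ⋖ y₁ ∧ z ⋖ y₂),
      W.p y₁ z * W.p y₂ z / W.chSum z x = c l

/-- Property UL.3 with constants `c`. -/
def UL3 (c : ℤ → ℝ) : Prop :=
  ∀ l : ℤ, 0 ≤ l → l < W.d → ∀ y : P, W.rk y = l →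
    ∑ x ∈ univ.filter (fun x => y ⋖ x), W.m x * W.p x y ^ 2 = c l * W.m y

/-- Property AL. -/
def AL : Prop :=
  ∀ l : ℤ, 0 ≤ l → l ≤ W.d - 1 → ∀ x y : P, W.rk x = l → W.rk y = l → x ≠ y →
    ∑ z ∈ univ.filter (fun z => x ⋖ z ∧ y ⋖ z),
        W.m z * W.p z x * W.p z y / (1 - W.p z x)
    = ∑ z ∈ univ.filter (fun z => x ⋖ z ∧ y ⋖ z),
        W.m z * W.p z x * W.p z y *
          ∑ s ∈ univ.filter (fun s => s ⋖ x ∧ s ⋖ y),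
            W.p x s * W.p y s / (W.chSum s z - W.p z x * W.p x s)

/-- Equation TL.1 with constant `c`. -/
def TL1 (c : ℝ) : Prop :=
  ∀ y : P, W.rk y = 0 →
    c * W.m y = ∑ z ∈ univ.filter (fun z => y ⋖ z), W.m z * W.p z y ^ 2 *
      ∑ x ∈ univ.filter (fun x => x ⋖ z ∧ x ≠ y), W.p z x / (1 - W.p z x) ^ 2

/-- Equation TL.2 with constant `c`. -/
def TL2 (c : ℝ) : Prop :=
  ∀ y₁ y₂ : P, W.rk y₁ = 0 → W.rk y₂ = 0 → y₁ ≠ y₂ →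
    c * ∑ z ∈ univ.filter (fun z => y₁ ⋖ z ∧ y₂ ⋖ z),
          W.m z * W.p z y₁ * W.p z y₂ / (1 - W.p z y₁)
    = ∑ z ∈ univ.filter (fun z => y₁ ⋖ z ∧ y₂ ⋖ z),
        W.m z * W.p z y₁ * W.p z y₂ *
          ∑ x ∈ univ.filter (fun x => x ⋖ z ∧ x ≠ y₁ ∧ x ≠ y₂),
            W.p z x / (1 - W.p z x) ^ 2

/-- Equation TL.3 with constant `c`. -/
def TL3 (c : ℝ) : Prop :=
  ∀ y : P, W.rk y = 0 →
    c * W.m y =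
      ∑ x ∈ univ.filter (fun x => W.rk x = 0 ∧ x ≠ y),
        ∑ z ∈ univ.filter (fun z => x ⋖ z ∧ y ⋖ z),
          ∑ w ∈ univ.filter (fun w => w ≠ z ∧ x ⋖ w ∧ y ⋖ w),
            ∑ u ∈ univ.filter (fun u => z ⋖ u ∧ w ⋖ u),
              W.m u * W.p u z * W.p u w * W.p w y * W.p z y * W.p w x * W.p z x /
                (W.chSum x u * (1 - W.p u z * W.p z x / W.chSum x u) *
                  (1 - W.p w x) * (1 - W.p z x))

/-- Equation TL.4 with constant `c`. -/
def TL4 (c : ℝ) : Prop :=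
  ∀ y₁ y₂ : P, W.rk y₁ = 0 → W.rk y₂ = 0 → y₁ ≠ y₂ →
    c * ∑ z ∈ univ.filter (fun z => y₁ ⋖ z ∧ y₂ ⋖ z),
          W.m z * W.p z y₁ * W.p z y₂ / (1 - W.p z y₁)
    = ∑ x ∈ univ.filter (fun x => W.rk x = 0 ∧ x ≠ y₁ ∧ x ≠ y₂),
        ∑ z ∈ univ.filter (fun z => x ⋖ z ∧ y₂ ⋖ z),
          ∑ w ∈ univ.filter (fun w => w ≠ z ∧ x ⋖ w ∧ y₁ ⋖ w),
            ∑ u ∈ univ.filter (fun u => z ⋖ u ∧ w ⋖ u),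
              W.m u * W.p u z * W.p u w * W.p w y₁ * W.p z y₂ * W.p w x * W.p z x /
                (W.chSum x u * (1 - W.p u z * W.p z x / W.chSum x u) *
                  (1 - W.p w x) * (1 - W.p z x))

/-- The induced function `f̂_x ∈ C^0(P_x)` of `f ∈ C^0`. -/
def hatF (x : P) (f : P → ℝ) : P → ℝ := fun z =>
  (1 / (1 - W.p z x)) * ∑ y ∈ univ.filter (fun y => y ≠ x ∧ y ⋖ z), W.p z y * f y

/-- `P` is connected: the Markov chain `M^+_0` on `P(0)` is irreducible. -/
def Connected : Prop :=
  ∀ y z : P, W.rk y = 0 → W.rk z = 0 →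
    ∃ j : ℕ, 0 < j ∧ ((W.downMat * W.upMat) ^ j) z y ≠ 0

/-- The link `P_x` is connected: the Markov chain `M^+_{x,0}` on `P_x(0)` is
irreducible. -/
def LinkConnected (x : P) : Prop :=
  ∀ y z : P, x ⋖ y → x ⋖ z →
    ∃ j : ℕ, 0 < j ∧ ((W.downMatL x * W.upMatL x) ^ j) z y ≠ 0

/-- `c` is a nontrivial eigenvalue of the adjacency operator `A` of `P`,
i.e. one with an eigenvector orthogonal to the constants. -/
def IsNontrivEigAdj (c : ℝ) : Prop :=
  ∃ f : P → ℝ, (∃ y, W.rk y = 0 ∧ f y ≠ 0) ∧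
    (∀ y, W.rk y = 0 → W.Adj f y = c * f y) ∧
    W.innerAt 0 f (fun _ => 1) = 0

/-- `c` is a nontrivial eigenvalue of the adjacency operator `A_x` of the
link `P_x`. -/
def IsNontrivEigAdjL (x : P) (c : ℝ) : Prop :=
  ∃ f : P → ℝ, (∃ y, x ⋖ y ∧ f y ≠ 0) ∧
    (∀ y, x ⋖ y → W.AdjL x f y = c * f y) ∧
    W.innerL x 0 f (fun _ => 1) = 0

end WGP


section Abstract

variable {S : Type} [Fintype S]

theorem aux_spec (w : S → ℝ) (hw : ∀ i, 0 < w i) (A : Matrix S S ℝ)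
    (hs : ∀ i j, w i * A i j = w j * A j i) :
    ∃ (u : S → S → ℝ) (lam : S → ℝ),
      (∀ k, A.mulVec (u k) = lam k • u k) ∧ (∀ k, u k ≠ 0) ∧
      ∀ f g : S → ℝ, ∑ i, w i * f i * g i
        = ∑ k, (∑ i, w i * f i * u k i) * (∑ i, w i * g i * u k i) := by
  classical
  set r : S → ℝ := fun i => Real.sqrt (w i) with hr
  have hr0 : ∀ i, 0 < r i := fun i => Real.sqrt_pos.2 (hw i)
  have hrr : ∀ i, r i * r i = w i := fun i => Real.mul_self_sqrt (hw i).le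
  let C : Matrix S S ℝ := Matrix.of fun i j => r i * A i j / r j
  have hC : C.IsHermitian := by
    ext i j
    simp only [C, Matrix.conjTranspose_apply, Matrix.of_apply, star_trivial]
    rw [div_eq_div_iff (hr0 _).ne' (hr0 _).ne']
    have := hs i j
    rw [← hrr, ← hrr] at this
    linarith
  have hu : ∀ k, (hC.eigenvectorBasis k : EuclideanSpace ℝ S) ≠ 0 := fun k =>
    hC.eigenvectorBasis.orthonormal.ne_zero k
  refine ⟨fun k i => hC.eigenvectorBasis k i / r i, hC.eigenvalues, ?_, ?_, ?_⟩
  · intro k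
    ext i
    have h := congrFun (hC.mulVec_eigenvectorBasis k) i
    simp only [Matrix.mulVec, dotProduct, C, Matrix.of_apply, Pi.smul_apply, smul_eq_mul] at h ⊢
    rw [← mul_div_assoc, ← h, Finset.sum_div]
    refine Finset.sum_congr rfl fun j _ => ?_
    have := (hr0 i).ne'
    have := (hr0 j).ne'
    field_simp
  · intro k h0
    apply hu k
    ext i
    have := congrFun h0 i
    simp only [Pi.zero_apply, div_eq_zero_iff, (hr0 i).ne', or_false] at this
    simpa using this
  · intro f g
    have key := hC.eigenvectorBasis.sum_inner_mul_inner
      (WithLp.toLp 2 (fun i => r i * f i)) (WithLp.toLp 2 (fun i => r i * g i))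
    simp only [PiLp.inner_apply, RCLike.inner_apply, conj_trivial] at key
    have e1 : ∑ i, w i * f i * g i = ∑ i, r i * g i * (r i * f i) :=
      Finset.sum_congr rfl fun i _ => by rw [← hrr]; ring
    rw [e1, ← key]
    refine Finset.sum_congr rfl fun k _ => ?_
    congr 1 <;> refine Finset.sum_congr rfl fun i _ => ?_
    · have := (hr0 i).ne'
      rw [← hrr]; field_simp
    · have := (hr0 i).ne'
      rw [← hrr]; field_simp

theorem aux_le_one (w : S → ℝ) (A : Matrix S S ℝ) (hw : ∀ i, 0 < w i)
    (hs : ∀ i j, w i * A i j = w j * A j i) (hA : ∀ i j, 0 ≤ A i j)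
    (h1 : ∀ i, ∑ j, A i j = 1) (u : S → ℝ) (lam : ℝ) (hu : u ≠ 0)
    (he : A.mulVec u = lam • u) : lam ≤ 1 := by
  have hpos : 0 < ∑ i, w i * u i ^ 2 := by
    obtain ⟨i, hi⟩ := Function.ne_iff.1 hu
    refine Finset.sum_pos' (fun i _ => mul_nonneg (hw i).le (sq_nonneg _)) ⟨i, mem_univ _, ?_⟩
    have : u i ≠ 0 := hi
    have := hw i
    positivity
  have h2 : 0 ≤ ∑ i, ∑ j, w i * A i j * (u i - u j) ^ 2 :=
    Finset.sum_nonneg fun i _ => Finset.sum_nonneg fun j _ =>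
      mul_nonneg (mul_nonneg (hw i).le (hA i j)) (sq_nonneg _)
  have e1 : ∑ i, ∑ j, w i * A i j * u i ^ 2 = ∑ i, w i * u i ^ 2 := by
    refine Finset.sum_congr rfl fun i _ => ?_
    calc _ = w i * u i ^ 2 * ∑ j, A i j := by
          rw [Finset.mul_sum]; exact Finset.sum_congr rfl fun j _ => by ring
      _ = _ := by rw [h1, mul_one]
  have e2 : ∑ i, ∑ j, w i * A i j * u j ^ 2 = ∑ i, w i * u i ^ 2 := by
    rw [Finset.sum_comm, ← e1]
    exact Finset.sum_congr rfl fun i _ => Finset.sum_congr rfl fun j _ => by rw [hs]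
  have e3 : ∑ i, ∑ j, w i * A i j * (u i * u j) = lam * ∑ i, w i * u i ^ 2 := by
    rw [Finset.mul_sum]
    refine Finset.sum_congr rfl fun i _ => ?_
    have := congrFun he i
    simp only [Matrix.mulVec, dotProduct, Pi.smul_apply, smul_eq_mul] at this
    calc _ = w i * u i * ∑ j, A i j * u j := by
          rw [Finset.mul_sum]; exact Finset.sum_congr rfl fun j _ => by ring
      _ = _ := by rw [this]; ring
  have e4 : ∑ i, ∑ j, w i * A i j * (u i - u j) ^ 2
      = ∑ i, ∑ j, w i * A i j * u i ^ 2 + ∑ i, ∑ j, w i * A i j * u j ^ 2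
        - 2 * ∑ i, ∑ j, w i * A i j * (u i * u j) := by
    simp only [Finset.mul_sum, ← Finset.sum_add_distrib, ← Finset.sum_sub_distrib]
    exact Finset.sum_congr rfl fun i _ => Finset.sum_congr rfl fun j _ => by ring
  rw [e4, e1, e2, e3] at h2
  by_contra hlt
  push Not at hlt
  nlinarith

theorem aux_mu (w : S → ℝ) (hw : ∀ i, 0 < w i) (A : Matrix S S ℝ)
    (hs : ∀ i j, w i * A i j = w j * A j i) (hA : ∀ i j, 0 ≤ A i j)
    (h1 : ∀ i, ∑ j, A i j = 1) (mu : ℝ) (hmu : eigMultAboveLe A.mulVecLin mu 1)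
    (u : S → ℝ) (lam : ℝ) (hu : u ≠ 0) (he : A.mulVec u = lam • u)
    (h : S → ℝ) (hh : ∑ i, w i * h i = 0) (hc : ∑ i, w i * h i * u i ≠ 0) : lam ≤ mu := by
  by_contra hlt
  push Not at hlt
  have hl1 := aux_le_one w A hw hs hA h1 u lam hu he
  have hmem : u ∈ Module.End.eigenspace A.mulVecLin lam := by
    rw [Module.End.mem_eigenspace_iff]; simpa using he
  have hone : (fun _ => 1 : S → ℝ) ∈ Module.End.eigenspace A.mulVecLin 1 := by
    rw [Module.End.mem_eigenspace_iff]
    ext i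
    simp [Matrix.mulVec, dotProduct, h1]
  have hne : (fun _ => 1 : S → ℝ) ≠ 0 := by
    obtain ⟨i, hi⟩ := Function.ne_iff.1 hu
    intro h0; simpa using congrFun h0 i
  have p1 : 0 < Module.finrank ℝ (Module.End.eigenspace A.mulVecLin lam) :=
    Module.finrank_pos_iff_exists_ne_zero.2 ⟨⟨u, hmem⟩, by simpa using hu⟩
  have p2 : 0 < Module.finrank ℝ (Module.End.eigenspace A.mulVecLin 1) :=
    Module.finrank_pos_iff_exists_ne_zero.2 ⟨⟨_, hone⟩, by simpa using hne⟩
  rcases eq_or_ne lam 1 with rfl | hne1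
  · have := hmu {1} (by simpa using hlt)
    rw [Finset.sum_singleton] at this
    have h3 : Module.finrank ℝ (Module.End.eigenspace A.mulVecLin 1) = 1 := by omega
    obtain ⟨c, hc'⟩ := (finrank_eq_one_iff_of_nonzero' (⟨_, hone⟩ : Module.End.eigenspace A.mulVecLin 1)
      (by simpa using hne)).1 h3 ⟨u, hmem⟩
    have hcu : ∀ i, u i = c := fun i => by
      have := congrFun (congrArg Subtype.val hc') i
      simpa using this.symm
    apply hc
    simp only [hcu, ← Finset.sum_mul, hh, zero_mul]
  · have := hmu {lam, 1} (by
      intro x hx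
      simp only [Finset.mem_insert, Finset.mem_singleton] at hx
      rcases hx with rfl | rfl
      · exact hlt
      · linarith)
    rw [Finset.sum_pair hne1] at this
    omega

theorem aux_main (w : S → ℝ) (hw : ∀ i, 0 < w i) (hw1 : ∑ i, w i = 1) (A : Matrix S S ℝ)
    (hs : ∀ i j, w i * A i j = w j * A j i) (hA : ∀ i j, 0 ≤ A i j)
    (h1 : ∀ i, ∑ j, A i j = 1) (mu nu α : ℝ) (hmu : eigMultAboveLe A.mulVecLin mu 1)
    (hnu : ∀ c : ℝ, Module.End.HasEigenvalue A.mulVecLin c → nu ≤ c) (f g : S → ℝ) (E : ℝ)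
    (hE : E = ∑ i, w i * f i) :
    (∑ i, w i * (A.mulVec (fun j => f j - E) i - α * (f i - E)) * f i
      ≤ max (mu - α) 0 * ∑ i, w i * f i * f i) ∧
    (0 ≤ max (mu - α) (α - nu) → |∑ i, w i * (A.mulVec (fun j => f j - E) i - α * (f i - E)) * g i|
      ≤ max (mu - α) (α - nu) * (Real.sqrt (∑ i, w i * f i * f i)
        * Real.sqrt (∑ i, w i * g i * g i))) := by
  obtain ⟨u, lam, he, hu, hP⟩ := aux_spec w hw A hs
  set h : S → ℝ := fun j => f j - E with hh
  have hh0 : ∑ i, w i * h i = 0 := by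
    simp only [hh, mul_sub, Finset.sum_sub_distrib, ← Finset.sum_mul, hw1, ← hE]; ring
  have hsa : ∀ a b : S → ℝ, ∑ i, w i * A.mulVec a i * b i = ∑ i, w i * a i * A.mulVec b i := by
    intro a b
    simp only [Matrix.mulVec, dotProduct, Finset.mul_sum, Finset.sum_mul]
    rw [Finset.sum_comm]
    refine Finset.sum_congr rfl fun i _ => Finset.sum_congr rfl fun j _ => ?_
    linear_combination (a i * b j) * hs j i
  have hB : ∀ k, ∑ i, w i * (A.mulVec h i - α * h i) * u k i
      = (lam k - α) * ∑ i, w i * h i * u k i := by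
    intro k
    have := hsa h (u k)
    rw [he] at this
    calc _ = ∑ i, w i * A.mulVec h i * u k i - α * ∑ i, w i * h i * u k i := by
          rw [Finset.mul_sum, ← Finset.sum_sub_distrib]
          exact Finset.sum_congr rfl fun i _ => by ring
      _ = _ := by
          rw [this, sub_mul, Finset.mul_sum (a := lam k)]
          congr 1
          refine Finset.sum_congr rfl fun i _ => ?_
          simp only [Pi.smul_apply, smul_eq_mul]; ring
  have hform : ∀ b : S → ℝ, ∑ i, w i * (A.mulVec h i - α * h i) * b i
      = ∑ k, (lam k - α) * (∑ i, w i * h i * u k i) * (∑ i, w i * b i * u k i) := by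
    intro b
    rw [hP]
    exact Finset.sum_congr rfl fun k _ => by rw [hB]
  have hlam : ∀ k, ∑ i, w i * h i * u k i ≠ 0 → lam k ≤ mu := fun k hk =>
    aux_mu w hw A hs hA h1 mu hmu (u k) (lam k) (hu k) (he k) h hh0 hk
  have hlam' : ∀ k, nu ≤ lam k := fun k => hnu _ <|
    Module.End.hasEigenvalue_of_hasEigenvector (x := u k)
      ⟨by rw [Module.End.mem_eigenspace_iff]; simpa using he k, hu k⟩
  have hnorm : ∑ i, w i * h i * h i ≤ ∑ i, w i * f i * f i := by
    have : ∑ i, w i * f i * f i = ∑ i, w i * h i * h i + E ^ 2 := by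
      have e : ∑ i, w i * f i * f i = ∑ i, w i * h i * h i + 2 * E * ∑ i, w i * h i
          + E ^ 2 * ∑ i, w i := by
        simp only [Finset.mul_sum, ← Finset.sum_add_distrib]
        exact Finset.sum_congr rfl fun i _ => by simp only [hh]; ring
      rw [e, hh0, hw1]; ring
    rw [this]; nlinarith [sq_nonneg E]
  have hnn : 0 ≤ ∑ i, w i * h i * h i := Finset.sum_nonneg fun i _ => by
    rw [mul_assoc]; exact mul_nonneg (hw i).le (mul_self_nonneg _)
  constructor
  · have hA1 : ∑ i, w i * A.mulVec h i = 0 := by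
      have := hsa h (fun _ => 1)
      have e : A.mulVec (fun _ => 1) = fun _ => 1 := by
        ext i; simp [Matrix.mulVec, dotProduct, h1]
      rw [e] at this
      simpa [hh0] using this
    have e : ∑ i, w i * (A.mulVec h i - α * h i) * f i
        = ∑ i, w i * (A.mulVec h i - α * h i) * h i := by
      have : ∑ i, w i * (A.mulVec h i - α * h i) * f i
        = ∑ i, w i * (A.mulVec h i - α * h i) * h i
          + E * ∑ i, w i * A.mulVec h i - E * α * ∑ i, w i * h i := by
        simp only [Finset.mul_sum, ← Finset.sum_add_distrib, ← Finset.sum_sub_distrib]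
        exact Finset.sum_congr rfl fun i _ => by simp only [hh]; ring
      rw [this, hA1, hh0]; ring
    calc _ = ∑ i, w i * (A.mulVec h i - α * h i) * h i := e
      _ = ∑ k, (lam k - α) * (∑ i, w i * h i * u k i) * (∑ i, w i * h i * u k i) := hform h
      _ ≤ ∑ k, (mu - α) * ((∑ i, w i * h i * u k i) * (∑ i, w i * h i * u k i)) := by
          refine Finset.sum_le_sum fun k _ => ?_
          by_cases hk : ∑ i, w i * h i * u k i = 0
          · simp [hk]
          · rw [mul_assoc]
            exact mul_le_mul_of_nonneg_right (by linarith [hlam k hk]) (mul_self_nonneg _)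
      _ = (mu - α) * ∑ i, w i * h i * h i := by rw [hP h h, Finset.mul_sum]
      _ ≤ max (mu - α) 0 * ∑ i, w i * h i * h i :=
          mul_le_mul_of_nonneg_right (le_max_left _ _) hnn
      _ ≤ _ := mul_le_mul_of_nonneg_left hnorm (le_max_right _ _)
  · intro hC
    set C := max (mu - α) (α - nu) with hCdef
    have e := hform g
    calc _ = |∑ k, (lam k - α) * (∑ i, w i * h i * u k i) * (∑ i, w i * g i * u k i)| := by
          rw [← e]
      _ ≤ ∑ k, C * (|∑ i, w i * h i * u k i| * |∑ i, w i * g i * u k i|) := by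
          refine (Finset.abs_sum_le_sum_abs _ _).trans (Finset.sum_le_sum fun k _ => ?_)
          by_cases hk : ∑ i, w i * h i * u k i = 0
          · simp [hk]
          · rw [mul_assoc, abs_mul, ← abs_mul (∑ i, w i * h i * u k i)]
            refine mul_le_mul_of_nonneg_right ?_ (abs_nonneg _)
            rw [abs_le]
            have := le_max_left (mu - α) (α - nu)
            have := le_max_right (mu - α) (α - nu)
            have := hlam k hk
            have := hlam' k
            constructor <;> linarith
      _ = C * ∑ k, (|∑ i, w i * h i * u k i| * |∑ i, w i * g i * u k i|) := by
          rw [Finset.mul_sum]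
      _ ≤ C * (Real.sqrt (∑ i, w i * h i * h i) * Real.sqrt (∑ i, w i * g i * g i)) := by
          refine mul_le_mul_of_nonneg_left ?_ hC
          refine (Real.sum_mul_le_sqrt_mul_sqrt _ _ _).trans (le_of_eq ?_)
          simp only [sq_abs, hP h h, hP g g]
          simp only [sq]
      _ ≤ _ := mul_le_mul_of_nonneg_left
          (mul_le_mul_of_nonneg_right (Real.sqrt_le_sqrt hnorm) (Real.sqrt_nonneg _)) hC

end Abstract

namespace WGP

section Concrete

variable {P : Type} [Fintype P] [PartialOrder P] (W : WGP P)

theorem aux_p_zero {y x : P} (h : ¬ x ⋖ y) : W.p y x = 0 :=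
  le_antisymm (not_lt.1 fun h' => h ((W.p_pos_iff y x).1 h')) (W.p_nonneg y x)

theorem aux_rk_lt {a b : P} (h : a < b) : W.rk a < W.rk b := by
  obtain ⟨c, hc, hcb⟩ := exists_covBy_le_of_lt h
  have := W.rk_covBy _ _ hc
  have := W.rk_mono hcb
  omega

theorem aux_cov {x y : P} : x ⋖ y ↔ x ≤ y ∧ W.rk y = W.rk x + 1 := by
  constructor
  · exact fun h => ⟨h.le, W.rk_covBy _ _ h⟩
  · rintro ⟨h1, h2⟩
    refine ⟨lt_of_le_of_ne h1 (by rintro rfl; omega), fun c hc hc' => ?_⟩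
    have := W.aux_rk_lt hc
    have := W.aux_rk_lt hc'
    omega

theorem aux_ch0 (x : P) : W.chSum x x = 1 := by simp [chSum]

theorem aux_ch1 {x y : P} (h : x ⋖ y) : W.chSum x y = W.p y x := by
  have : (W.rk y - W.rk x).toNat = 1 := by have := W.rk_covBy _ _ h; omega
  simp [chSum, this, upMat]

theorem aux_ch2 {x y z : P} (h : x ⋖ y) (h' : y ⋖ z) :
    W.chSum x z = ∑ w, W.p z w * W.p w x := by
  have : (W.rk z - W.rk x).toNat = 2 := by
    have := W.rk_covBy _ _ h; have := W.rk_covBy _ _ h'; omega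
  simp [chSum, this, upMat, sq, Matrix.mul_apply]

theorem aux_ch2_pos {x y z : P} (h : x ⋖ y) (h' : y ⋖ z) : 0 < W.chSum x z := by
  rw [W.aux_ch2 h h']
  exact Finset.sum_pos' (fun w _ => mul_nonneg (W.p_nonneg _ _) (W.p_nonneg _ _))
    ⟨y, mem_univ _, mul_pos ((W.p_pos_iff _ _).2 h') ((W.p_pos_iff _ _).2 h)⟩

theorem aux_mL {x y : P} (h : x ⋖ y) : W.mL x y = W.m y / W.m x * W.p y x := by
  rw [mL, W.aux_ch1 h]

theorem aux_mL_pos {x y : P} (h : x ⋖ y) : 0 < W.mL x y := by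
  rw [W.aux_mL h]
  exact mul_pos (div_pos (W.m_pos _) (W.m_pos _)) ((W.p_pos_iff _ _).2 h)

theorem aux_sum_sub (x : P) (F : P → ℝ) (hF : ∀ y, ¬ x ⋖ y → F y = 0) :
    ∑ y : {y : P // x ⋖ y}, F y = ∑ y, F y := by
  rw [← Finset.sum_subtype (univ.filter (fun y => x ⋖ y)) (by simp) F, Finset.sum_filter]
  refine Finset.sum_congr rfl fun y _ => ?_
  split_ifs with h
  · rfl
  · exact (hF y h).symm

theorem aux_up_zero {x y z j : P} (hxy : x ⋖ y) (hyz : y ⋖ z) (hj : ¬ x ⋖ j) :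
    W.upMatL x z j = 0 := by
  simp only [upMatL, Matrix.of_apply]
  rw [if_neg]
  rintro ⟨h1, h2⟩
  apply hj
  rw [W.aux_cov]
  have := W.rk_covBy _ _ hxy
  have := W.rk_covBy _ _ hyz
  have := W.rk_covBy _ _ h1
  exact ⟨h2, by omega⟩

theorem aux_up_sum {x y z : P} (hxy : x ⋖ y) (hyz : y ⋖ z) :
    ∑ j : {j : P // x ⋖ j}, W.upMatL x z j = 1 := by
  have hpos := W.aux_ch2_pos hxy hyz
  have e : ∀ j : {j : P // x ⋖ j}, W.upMatL x z j = W.p z j * W.p j x / W.chSum x z := by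
    rintro ⟨j, hj⟩
    simp only [upMatL, Matrix.of_apply, pL, W.aux_ch1 hj]
    split_ifs with h
    · rfl
    · rw [W.aux_p_zero (y := z) (x := j) (fun h' => h ⟨h', hj.le⟩)]; simp
  simp only [e]
  rw [aux_sum_sub x (fun j => W.p z j * W.p j x / W.chSum x z)
    (fun j hj => by simp [W.aux_p_zero hj]), ← Finset.sum_div, ← W.aux_ch2 hxy hyz,
    div_self hpos.ne']

theorem aux_down {x y : P} (hxy : x ⋖ y) (z : P) :
    W.downMatL x y z = W.p z y * W.m z / W.m y := by
  simp only [downMatL, Matrix.of_apply]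
  split_ifs with h
  · have h1 := (W.aux_ch2_pos hxy h).ne'
    have h2 := (W.m_pos x).ne'
    have h3 := (W.m_pos y).ne'
    have h4 : W.chSum x y ≠ 0 := by
      rw [W.aux_ch1 hxy]; exact ((W.p_pos_iff _ _).2 hxy).ne'
    simp only [pL, mL]
    field_simp
  · simp [W.aux_p_zero h]

theorem aux_down_sum {x y : P} (hxy : x ⋖ y) (hd : W.rk y < W.d) :
    ∑ z, W.downMatL x y z = 1 := by
  simp only [W.aux_down hxy]
  rw [← Finset.sum_div]
  have := W.m_eq y hd
  rw [Finset.sum_filter] at this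
  have e : ∑ z, W.p z y * W.m z = W.m y := by
    rw [this]
    refine Finset.sum_congr rfl fun z _ => ?_
    split_ifs with h
    · rfl
    · simp [W.aux_p_zero h]
  rw [e, div_self (W.m_pos y).ne']

def auxA (x : P) : Matrix {y : P // x ⋖ y} {y : P // x ⋖ y} ℝ :=
  (W.downMatL x * W.upMatL x).submatrix Subtype.val Subtype.val

theorem auxA_symm (x : P) (i j : {y : P // x ⋖ y}) :
    W.mL x i * W.auxA x i j = W.mL x j * W.auxA x j i := by
  have key : ∀ i j : {y : P // x ⋖ y}, W.mL x i * W.auxA x i j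
      = ∑ z, if i.1 ⋖ z ∧ j.1 ⋖ z then W.pL x z i * W.pL x z j * W.mL x z else 0 := by
    intro i j
    simp only [auxA, Matrix.submatrix_apply, Matrix.mul_apply, Finset.mul_sum]
    refine Finset.sum_congr rfl fun z _ => ?_
    have := (W.aux_mL_pos i.2).ne'
    simp only [downMatL, upMatL, Matrix.of_apply, j.2.le, and_true]
    by_cases h1 : i.1 ⋖ z <;> by_cases h2 : j.1 ⋖ z <;> simp [h1, h2]
    field_simp
  rw [key, key]
  refine Finset.sum_congr rfl fun z _ => ?_
  simp only [and_comm (a := i.1 ⋖ z), mul_comm (W.pL x z i)]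

theorem auxA_nonneg (x : P) (i j : {y : P // x ⋖ y}) : 0 ≤ W.auxA x i j := by
  simp only [auxA, Matrix.submatrix_apply, Matrix.mul_apply]
  refine Finset.sum_nonneg fun z _ => ?_
  rw [W.aux_down i.2]
  by_cases h : i.1 ⋖ z
  · refine mul_nonneg (div_nonneg (mul_nonneg (W.p_nonneg _ _) (W.m_pos _).le) (W.m_pos _).le) ?_
    simp only [upMatL, Matrix.of_apply]
    split_ifs
    · rw [pL, W.aux_ch1 j.2]
      exact div_nonneg (mul_nonneg (W.p_nonneg _ _) (W.p_nonneg _ _)) (W.aux_ch2_pos i.2 h).le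
    · exact le_rfl
  · simp [W.aux_p_zero h]

theorem auxA_sum (x : P) (i : {y : P // x ⋖ y}) (hd : W.rk i.1 < W.d) :
    ∑ j, W.auxA x i j = 1 := by
  simp only [auxA, Matrix.submatrix_apply, Matrix.mul_apply]
  rw [Finset.sum_comm, ← W.aux_down_sum i.2 hd]
  refine Finset.sum_congr rfl fun z _ => ?_
  rw [← Finset.mul_sum]
  by_cases h : i.1 ⋖ z
  · rw [W.aux_up_sum i.2 h, mul_one]
  · simp [downMatL, h]

theorem auxA_mulVec (x : P) (i : {y : P // x ⋖ y}) (h : P → ℝ) :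
    W.MplusL x h i = (W.auxA x).mulVec (fun j => h j) i := by
  simp only [MplusL, DownL, UpL, auxA, Matrix.mulVec, dotProduct, Matrix.submatrix_apply,
    Matrix.mul_apply, Finset.sum_mul]
  rw [Finset.sum_comm]
  refine Finset.sum_congr rfl fun z _ => ?_
  by_cases hz : i.1 ⋖ z
  · rw [← aux_sum_sub x (fun j => W.upMatL x z j * h j)
      (fun j hj => by simp [W.aux_up_zero i.2 hz hj]), Finset.mul_sum]
    exact Finset.sum_congr rfl fun j _ => by ring
  · simp [downMatL, hz]

theorem aux_minus (x : P) (i : {y : P // x ⋖ y}) (f : P → ℝ) :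
    W.MminusL x f i = ∑ j : {y : P // x ⋖ y}, W.mL x j * f j := by
  have hm := (W.m_pos x).ne'
  have hp := ((W.p_pos_iff _ _).2 i.2).ne'
  simp only [MminusL, UpL, DownL, Matrix.mulVec, dotProduct]
  rw [Finset.sum_eq_single x]
  · have e1 : W.upMatL x i x = 1 := by
      simp only [upMatL, Matrix.of_apply]
      rw [if_pos ⟨i.2, le_rfl⟩, pL, W.aux_ch0, W.aux_ch1 i.2, mul_one, div_self hp]
    rw [e1, one_mul, ← aux_sum_sub x (fun j => W.downMatL x x j * f j)
      (fun j hj => by simp [downMatL, hj])]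
    refine Finset.sum_congr rfl fun j _ => ?_
    have hp := ((W.p_pos_iff _ _).2 j.2).ne'
    simp only [downMatL, Matrix.of_apply]
    rw [if_pos j.2, pL, mL, mL, W.aux_ch0, W.aux_ch1 j.2]
    field_simp
  · intro b _ hb
    have : W.upMatL x i b = 0 := by
      simp only [upMatL, Matrix.of_apply]
      rw [if_neg]
      rintro ⟨h1, h2⟩
      exact i.2.2 (lt_of_le_of_ne h2 (Ne.symm hb)) h1.lt
    simp [this]
  · simp

theorem aux_inner (x : P) (f g : P → ℝ) :
    W.innerL x 0 f g = ∑ j : {y : P // x ⋖ y}, W.mL x j * f j * g j := by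
  rw [innerL]
  exact Finset.sum_subtype (W.linkLvl x 0)
    (fun y => by simp [linkLvl, W.aux_cov (x := x) (y := y)]) (fun j => W.mL x j * f j * g j)

theorem aux_mL_sum (x : P) (hd : W.rk x < W.d) :
    ∑ j : {y : P // x ⋖ y}, W.mL x j = 1 := by
  have hm := (W.m_pos x).ne'
  have := W.m_eq x hd
  rw [Finset.sum_subtype _ (p := fun y => x ⋖ y) (by simp)] at this
  have e : ∑ j : {y : P // x ⋖ y}, W.mL x j = (∑ j : {y : P // x ⋖ y}, W.p j x * W.m j) / W.m x := by
    rw [Finset.sum_div]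
    exact Finset.sum_congr rfl fun j _ => by rw [W.aux_mL j.2]; ring
  rw [e, ← this, div_self hm]

theorem aux_norm (l : ℤ) (hl : 0 ≤ l) (f : P → ℝ) :
    ∑ x ∈ W.lvl (l - 1), W.m x * (∑ j : {y : P // x ⋖ y}, W.mL x j * f j * f j)
      = W.normSqAt l f := by
  have e : ∀ x, W.m x * (∑ j : {y : P // x ⋖ y}, W.mL x j * f j * f j)
      = ∑ y, W.p y x * (W.m y * f y * f y) := by
    intro x
    have hm := (W.m_pos x).ne'
    rw [← aux_sum_sub x (fun y => W.p y x * (W.m y * f y * f y))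
      (fun j hj => by simp [W.aux_p_zero hj]), Finset.mul_sum]
    refine Finset.sum_congr rfl fun j _ => ?_
    rw [W.aux_mL j.2]
    field_simp
  simp only [e]
  rw [Finset.sum_comm, normSqAt, innerAt, lvl, lvl, Finset.sum_filter]
  refine Finset.sum_congr rfl fun y _ => ?_
  rw [← Finset.sum_mul]
  split_ifs with h
  · have := W.p_sum y (by omega)
    have e2 : ∑ x with W.rk x = l - 1, W.p y x = ∑ x with x ⋖ y, W.p y x := by
      symm
      refine Finset.sum_subset (fun x hx => ?_) (fun x _ hx => ?_)
      · simp only [mem_filter, mem_univ, true_and] at hx ⊢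
        have := W.rk_covBy _ _ hx
        omega
      · exact W.aux_p_zero (by simpa using hx)
    rw [e2, this, one_mul]
  · rw [Finset.sum_eq_zero, zero_mul]
    intro x hx
    simp only [mem_filter, mem_univ, true_and] at hx
    apply W.aux_p_zero
    intro hc
    have := W.rk_covBy _ _ hc
    omega

end Concrete
end WGP

/-- bounding the correction terms via the second largest and
least eigenvalues of the link walks. -/
theorem stmt7 {P : Type} [Fintype P] [PartialOrder P] (W : WGP P)
    (l : ℤ) (hl0 : 0 ≤ l) (hld : l ≤ W.d - 1) (α : ℝ)
    (muF nuF : P → ℝ)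
    (hmuF : ∀ x : P, W.rk x = l - 1 → IsSecondLargestEig (W.MplusEndL x) (muF x))
    (hnuF : ∀ x : P, W.rk x = l - 1 → IsLeastEig (W.MplusEndL x) (nuF x))
    (mu' nu' : ℝ)
    (hmu'ub : ∀ x : P, W.rk x = l - 1 → muF x ≤ mu')
    (hmu'mem : ∃ x : P, W.rk x = l - 1 ∧ muF x = mu')
    (hnu'lb : ∀ x : P, W.rk x = l - 1 → nu' ≤ nuF x)
    (hnu'mem : ∃ x : P, W.rk x = l - 1 ∧ nuF x = nu')
    (f g : P → ℝ) :
    (∑ x ∈ W.lvl (l - 1), W.m x *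
        W.innerL x 0
          (fun y => W.MplusL x (fun w => f w - W.MminusL x f w) y
            - α * (f y - W.MminusL x f y)) f
      ≤ max (mu' - α) 0 * W.normSqAt l f) ∧
    (∑ x ∈ W.lvl (l - 1), W.m x *
        |W.innerL x 0
          (fun y => W.MplusL x (fun w => f w - W.MminusL x f w) y
            - α * (f y - W.MminusL x f y)) g|
      ≤ max (mu' - α) (α - nu') * W.normAt l f * W.normAt l g) := by
  have hnumu : nu' ≤ mu' := by
    obtain ⟨x, hx, rfl⟩ := hmu'mem
    exact (hnu'lb x hx).trans ((hnuF x hx).2 _ (hmuF x hx).1)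
  have hC : 0 ≤ max (mu' - α) (α - nu') := by
    rcases le_total α mu' with h | h
    · exact le_max_of_le_left (by linarith)
    · exact le_max_of_le_right (by linarith)
  have key := fun x (hx : W.rk x = l - 1) (g : P → ℝ) =>
    aux_main (fun y : {y : P // x ⋖ y} => W.mL x y) (fun y => W.aux_mL_pos y.2)
      (W.aux_mL_sum x (by omega)) (W.auxA x) (W.auxA_symm x) (W.auxA_nonneg x)
      (fun i => W.auxA_sum x i (by have := W.rk_covBy _ _ i.2; omega)) mu' nu' α
      (fun s hs => (hmuF x hx).2.1 s (fun μ hμ => (hmu'ub x hx).trans_lt (hs μ hμ)))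
      (fun c hc => (hnu'lb x hx).trans ((hnuF x hx).2 c hc))
      (fun y => f y) (fun y => g y) _ rfl
  have hin : ∀ x (g : P → ℝ), W.innerL x 0
          (fun y => W.MplusL x (fun w => f w - W.MminusL x f w) y
            - α * (f y - W.MminusL x f y)) g
      = ∑ i : {y : P // x ⋖ y}, W.mL x i * ((W.auxA x).mulVec
          (fun j => f j - ∑ j : {y : P // x ⋖ y}, W.mL x j * f j) i
          - α * (f i - ∑ j : {y : P // x ⋖ y}, W.mL x j * f j)) * g i := by
    intro x g
    rw [W.aux_inner]
    refine Finset.sum_congr rfl fun i _ => ?_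
    rw [W.auxA_mulVec, W.aux_minus]
    simp only [W.aux_minus]
  have hnn : ∀ x (g : P → ℝ), 0 ≤ ∑ j : {y : P // x ⋖ y}, W.mL x j * g j * g j := fun x g =>
    Finset.sum_nonneg fun j _ => by
      rw [mul_assoc]; exact mul_nonneg (W.aux_mL_pos j.2).le (mul_self_nonneg _)
  simp only [hin]
  constructor
  · rw [← W.aux_norm l hl0 f, Finset.mul_sum]
    refine Finset.sum_le_sum fun x hx => ?_
    have hx' : W.rk x = l - 1 := by simpa [WGP.lvl] using hx
    rw [mul_left_comm]
    exact mul_le_mul_of_nonneg_left (key x hx' f).1 (W.m_pos x).le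
  · set C := max (mu' - α) (α - nu') with hCd
    calc _ ≤ ∑ x ∈ W.lvl (l - 1), C *
            (Real.sqrt (W.m x * ∑ j : {y : P // x ⋖ y}, W.mL x j * f j * f j)
            * Real.sqrt (W.m x * ∑ j : {y : P // x ⋖ y}, W.mL x j * g j * g j)) := by
          refine Finset.sum_le_sum fun x hx => ?_
          have hx' : W.rk x = l - 1 := by simpa [WGP.lvl] using hx
          have h2 := mul_le_mul_of_nonneg_left ((key x hx' g).2 hC) (W.m_pos x).le
          refine h2.trans (le_of_eq ?_)
          rw [Real.sqrt_mul (W.m_pos x).le, Real.sqrt_mul (W.m_pos x).le]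
          have := Real.mul_self_sqrt (W.m_pos x).le
          nth_rewrite 1 [← this]
          ring
      _ ≤ C * (W.normAt l f * W.normAt l g) := by
          rw [← Finset.mul_sum]
          refine mul_le_mul_of_nonneg_left ?_ hC
          refine (Real.sum_sqrt_mul_sqrt_le _ (fun x => mul_nonneg (W.m_pos x).le (hnn x f))
            (fun x => mul_nonneg (W.m_pos x).le (hnn x g))).trans (le_of_eq ?_)
          rw [W.aux_norm l hl0 f, W.aux_norm l hl0 g, WGP.normAt, WGP.normAt]
      _ = _ := by ring
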